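/- Let T ∈ ℝ^{N×N} be a column-stochastic matrix (nonnegative entries, ∑_i T_{ij} = 1 for all j), and let p, q : Fin N → ℝ be nonnegative vectors. Then ∑_i √((T p)_i · (T q)_i) ≥ ∑_i √(p_i · q_i), where (T p)_i = ∑_j T_{ij} p_j. Consequently, a stochastic map never decreases the Bhattacharyya coefficient, i.e., it contracts both the Bhattacharyya distance √2·arccos(∑_i √(p_i q_i)) and the Hellinger distance 2√(1 − ∑_i √(p_i q_i)) between probability vectors. -/

import Mathlib

open Finset

/-- A column-stochastic map never decreases the Bhattacharyya coefficient of
nonnegative vectors; consequently it contracts both the Bhattacharyya and the Hellinger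
distances between probability vectors. -/
theorem stochastic_increases_bhattacharyya (N : ℕ)
    (T : Matrix (Fin N) (Fin N) ℝ)
    (hTnonneg : ∀ i j, 0 ≤ T i j) (hTcol : ∀ j, ∑ i, T i j = 1)
    (p q : Fin N → ℝ) (hp : ∀ i, 0 ≤ p i) (hq : ∀ i, 0 ≤ q i) :
    (∑ i, Real.sqrt (p i * q i) ≤ ∑ i, Real.sqrt (T.mulVec p i * T.mulVec q i)) ∧
    ((∑ i, p i = 1) → (∑ i, q i = 1) →
      (Real.sqrt 2 * Real.arccos (∑ i, Real.sqrt (T.mulVec p i * T.mulVec q i))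
          ≤ Real.sqrt 2 * Real.arccos (∑ i, Real.sqrt (p i * q i))) ∧
      (2 * Real.sqrt (1 - ∑ i, Real.sqrt (T.mulVec p i * T.mulVec q i))
          ≤ 2 * Real.sqrt (1 - ∑ i, Real.sqrt (p i * q i)))) := by
  have key : ∑ i, Real.sqrt (p i * q i) ≤ ∑ i, Real.sqrt (T.mulVec p i * T.mulVec q i) := by
    calc ∑ j, Real.sqrt (p j * q j) = ∑ j, ∑ i, T i j * Real.sqrt (p j * q j) := by
          refine Finset.sum_congr rfl fun j _ => ?_
          rw [← Finset.sum_mul, hTcol, one_mul]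
      _ = ∑ i, ∑ j, T i j * Real.sqrt (p j * q j) := Finset.sum_comm
      _ ≤ _ := by
          refine Finset.sum_le_sum fun i _ => ?_
          have hP : 0 ≤ T.mulVec p i := by
            simp only [Matrix.mulVec, dotProduct]
            exact Finset.sum_nonneg fun j _ => mul_nonneg (hTnonneg i j) (hp j)
          rw [Real.sqrt_mul hP]
          refine le_trans (le_of_eq ?_) (Real.sum_sqrt_mul_sqrt_le Finset.univ
            (f := fun j => T i j * p j) (g := fun j => T i j * q j)
            (fun j => mul_nonneg (hTnonneg i j) (hp j))
            (fun j => mul_nonneg (hTnonneg i j) (hq j)))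
          refine Finset.sum_congr rfl fun j _ => ?_
          rw [Real.sqrt_mul (hTnonneg i j), Real.sqrt_mul (hTnonneg i j), Real.sqrt_mul (hp j),
            mul_mul_mul_comm, Real.mul_self_sqrt (hTnonneg i j)]
  refine ⟨key, fun _ _ => ⟨?_, ?_⟩⟩
  · exact mul_le_mul_of_nonneg_left (Real.arccos_le_arccos key) (Real.sqrt_nonneg _)
  · exact mul_le_mul_of_nonneg_left (Real.sqrt_le_sqrt (by linarith)) (by norm_num)
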